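/- arXiv:0704.3658 — 5 statements merged into one kernel-verified Lean document; each statement's English description precedes it below -/
import Mathlib

section
/- Let H be a complex Hilbert space, let (s_n)_{n ≥ 1} be bounded linear operators on H with s_m^* s_n = δ_{mn}·1 for all m, n ≥ 1, let j ≥ 1, and let Ω ∈ H be a unit vector that is cyclic for (s_n) and satisfies s_j Ω = Ω. Let Λ_j be the set of all finite sequences J of positive integers such that either J has length 1, or J has length at least 2 and the last entry of J is different from j. Then the family (s_J Ω)_{J ∈ Λ_j} is an orthonormal family in H whose closed linear span is all of H. -/
/-- For a finite sequence `J = (j₁, …, j_k)`, the product operator `s_{j₁} ⋯ s_{j_k}`. -/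
noncomputable def prodS {H : Type*} [NormedAddCommGroup H] [InnerProductSpace ℂ H]
    (s : ℕ → H →L[ℂ] H) (J : List ℕ) : H →L[ℂ] H :=
  (J.map s).prod

theorem prodS_cons {H : Type*} [NormedAddCommGroup H] [InnerProductSpace ℂ H]
    (s : ℕ → H →L[ℂ] H) (a : ℕ) (J : List ℕ) (v : H) :
    prodS s (a :: J) v = s a (prodS s J v) := by
  simp [prodS]

theorem prodS_nil {H : Type*} [NormedAddCommGroup H] [InnerProductSpace ℂ H]
    (s : ℕ → H →L[ℂ] H) (v : H) :
    prodS s [] v = v := by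
  simp [prodS]

theorem prodS_concat {H : Type*} [NormedAddCommGroup H] [InnerProductSpace ℂ H]
    (s : ℕ → H →L[ℂ] H) (a : ℕ) (J : List ℕ) (v : H) :
    prodS s (J ++ [a]) v = prodS s J (s a v) := by
  simp [prodS]

theorem closure_inv {H : Type*} [NormedAddCommGroup H] [InnerProductSpace ℂ H]
    (A : Set H) (T : H →L[ℂ] H) (h : ∀ v ∈ A, T v ∈ Submodule.span ℂ A) :
    ∀ v ∈ (Submodule.span ℂ A).topologicalClosure,
      T v ∈ (Submodule.span ℂ A).topologicalClosure := by
  intro v hv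
  have h2 : ∀ v ∈ Submodule.span ℂ A, T v ∈ Submodule.span ℂ A := by
    have : Submodule.span ℂ A ≤ (Submodule.span ℂ A).comap (T : H →ₗ[ℂ] H) :=
      Submodule.span_le.2 h
    exact fun v hv => this hv
  exact map_mem_closure T.continuous hv h2

theorem orthonormal_basis_of_P_infty_j
    {H : Type*} [NormedAddCommGroup H] [InnerProductSpace ℂ H] [CompleteSpace H]
    (s : ℕ → H →L[ℂ] H)
    (hCuntz : ∀ m n, 1 ≤ m → 1 ≤ n →
      (ContinuousLinearMap.adjoint (s m)).comp (s n) =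
        if m = n then (1 : H →L[ℂ] H) else 0)
    (j : ℕ) (hj : 1 ≤ j)
    (Ω : H) (hΩnorm : ‖Ω‖ = 1)
    (hcyc : ∀ K : Submodule ℂ H, IsClosed (K : Set H) → Ω ∈ K →
      (∀ n, 1 ≤ n → ∀ v ∈ K, s n v ∈ K) →
      (∀ n, 1 ≤ n → ∀ v ∈ K, ContinuousLinearMap.adjoint (s n) v ∈ K) → K = ⊤)
    (hfix : s j Ω = Ω) :
    Orthonormal ℂ
      (fun J : {J : List ℕ // (∀ x ∈ J, 1 ≤ x) ∧
          (J.length = 1 ∨ (2 ≤ J.length ∧ J.getLast? ≠ some j))} =>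
        prodS s J.1 Ω) ∧
    Dense ((Submodule.span ℂ (Set.range
      (fun J : {J : List ℕ // (∀ x ∈ J, 1 ≤ x) ∧
          (J.length = 1 ∨ (2 ≤ J.length ∧ J.getLast? ≠ some j))} =>
        prodS s J.1 Ω)) : Submodule ℂ H) : Set H) := by
  have hadj : ∀ m n, 1 ≤ m → 1 ≤ n → ∀ v, ContinuousLinearMap.adjoint (s m) (s n v) =
      if m = n then v else 0 := by
    intro m n hm hn v
    have := congrArg (fun T : H →L[ℂ] H => T v) (hCuntz m n hm hn)
    simp only [ContinuousLinearMap.comp_apply] at this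
    rw [this]
    split_ifs <;> simp
  have hin : ∀ m n, 1 ≤ m → 1 ≤ n → ∀ v w, inner ℂ (s m v) (s n w) =
      if m = n then inner ℂ v w else 0 := by
    intro m n hm hn v w
    rw [← ContinuousLinearMap.adjoint_inner_right, hadj m n hm hn]
    split_ifs <;> simp
  have hΩ1 : inner ℂ Ω Ω = 1 := by
    rw [inner_self_eq_norm_sq_to_K, hΩnorm]; simp
  have hlast : ∀ (a : ℕ) (K : List ℕ), (a :: K).getLast? ≠ some j → K.getLast? ≠ some j := by
    intro a K h h'
    cases K with
    | nil => simp at h'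
    | cons b K => rw [List.getLast?_cons_cons] at h; exact h h'
  have hA : ∀ K : List ℕ, (∀ x ∈ K, 1 ≤ x) → K.getLast? ≠ some j → K ≠ [] →
      inner ℂ Ω (prodS s K Ω) = 0 := by
    intro K
    induction K with
    | nil => intro _ _ h; exact absurd rfl h
    | cons a K ih =>
      intro hp hl _
      have hstep : inner ℂ Ω (prodS s (a :: K) Ω) = inner ℂ (s j Ω) (s a (prodS s K Ω)) := by
        rw [prodS_cons, hfix]
      rw [hstep, hin j a hj (hp a (by simp))]
      split_ifs with hja
      · apply ih (fun x hx => hp x (by simp [hx])) (hlast a K hl)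
        rintro rfl
        simp [hja] at hl
      · rfl
  have hB : ∀ J K : List ℕ, (∀ x ∈ J, 1 ≤ x) → (∀ x ∈ K, 1 ≤ x) → J.getLast? ≠ some j →
      K.getLast? ≠ some j →
      inner ℂ (prodS s J Ω) (prodS s K Ω) = if J = K then (1 : ℂ) else 0 := by
    intro J
    induction J with
    | nil =>
      intro K _ hK _ hKl
      cases K with
      | nil => simp [prodS_nil, hΩnorm]
      | cons a K => rw [prodS_nil, hA _ hK hKl (by simp)]; simp
    | cons a J ih =>
      intro K hJ hK hJl hKl
      cases K with
      | nil =>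
        rw [prodS_nil, ← inner_conj_symm, hA _ hJ hJl (by simp)]; simp
      | cons b K =>
        rw [prodS_cons, prodS_cons, hin a b (hJ a (by simp)) (hK b (by simp)),
          ih K (fun x hx => hJ x (by simp [hx])) (fun x hx => hK x (by simp [hx]))
            (hlast a J hJl) (hlast b K hKl)]
        by_cases h1 : a = b <;> by_cases h2 : J = K <;> simp [h1, h2]
  have hnorm : ∀ J : {J : List ℕ // (∀ x ∈ J, 1 ≤ x) ∧
          (J.length = 1 ∨ (2 ≤ J.length ∧ J.getLast? ≠ some j))},
      ∃ L : List ℕ, (∀ x ∈ L, 1 ≤ x) ∧ L.getLast? ≠ some j ∧ prodS s J.1 Ω = prodS s L Ω ∧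
        J.1 = if L = [] then [j] else L := by
    rintro ⟨J, hp, hJ⟩
    by_cases h : J = [j]
    · subst h
      exact ⟨[], by simp, by simp, by simp [prodS_nil, prodS_cons, hfix], by simp⟩
    · have hne : J ≠ [] := by
        rintro rfl
        simp at hJ
      refine ⟨J, hp, ?_, rfl, by simp [hne]⟩
      rcases hJ with hJ | hJ
      · obtain ⟨a, rfl⟩ := List.length_eq_one_iff.1 hJ
        simpa using h
      · exact hJ.2
  constructor
  · classical
    rw [orthonormal_iff_ite]
    intro J K
    obtain ⟨L, hL1, hL2, hL3, hL4⟩ := hnorm J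
    obtain ⟨M, hM1, hM2, hM3, hM4⟩ := hnorm K
    simp only [hL3, hM3]
    rw [hB L M hL1 hM1 hL2 hM2]
    have : L = M ↔ J = K := by
      rw [Subtype.ext_iff, hL4, hM4]
      constructor
      · rintro rfl; rfl
      · intro h
        split_ifs at h with h1 h2 h2
        · rw [h1, h2]
        · rw [← h] at hM2; simp at hM2
        · rw [h] at hL2; simp at hL2
        · exact h
    simp only [this]
  · set A := Set.range
      (fun J : {J : List ℕ // (∀ x ∈ J, 1 ≤ x) ∧
          (J.length = 1 ∨ (2 ≤ J.length ∧ J.getLast? ≠ some j))} =>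
        prodS s J.1 Ω) with hAdef
    have hall : ∀ L : List ℕ, (∀ x ∈ L, 1 ≤ x) → prodS s L Ω ∈ A := by
      intro L
      induction L using List.reverseRecOn with
      | nil =>
        intro _
        exact ⟨⟨[j], by simpa using hj, by simp⟩, by simp [prodS_nil, prodS_cons, hfix]⟩
      | append_singleton L a ih =>
        intro hp
        by_cases haj : a = j
        · rw [prodS_concat, haj, hfix]
          exact ih (fun x hx => hp x (by simp [hx]))
        · refine ⟨⟨L ++ [a], hp, ?_⟩, rfl⟩
          cases L with
          | nil => simp
          | cons b L => exact Or.inr ⟨by simp, by rw [List.getLast?_append]; simp [haj]⟩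
    have hΩA : Ω ∈ A := by simpa [prodS_nil] using hall [] (by simp)
    have htop := hcyc (Submodule.span ℂ A).topologicalClosure
      (Submodule.isClosed_topologicalClosure _)
      (Submodule.le_topologicalClosure _ (Submodule.subset_span hΩA))
      (fun n hn => closure_inv A (s n) (by
        rintro _ ⟨J, rfl⟩
        apply Submodule.subset_span
        have := hall (n :: J.1) (by
          intro x hx
          rcases List.mem_cons.1 hx with rfl | hx
          · exact hn
          · exact J.2.1 x hx)
        rwa [prodS_cons] at this))
      (fun n hn => closure_inv A (ContinuousLinearMap.adjoint (s n)) (by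
        rintro _ ⟨⟨J, hp, hJ⟩, rfl⟩
        cases J with
        | nil => simp at hJ
        | cons a J =>
          simp only [prodS_cons]
          rw [hadj n a hn (hp a (by simp))]
          split_ifs
          · exact Submodule.subset_span (hall J (fun x hx => hp x (by simp [hx])))
          · exact Submodule.zero_mem _))
    exact Submodule.dense_iff_topologicalClosure_eq_top.2 htop
end

section
/- Let j ≥ 1. Let H and H' be complex Hilbert spaces, let (s_n)_{n ≥ 1} and (s'_n)_{n ≥ 1} be families of bounded operators on H and H' respectively with s_m^* s_n = δ_{mn}·1 and s'_m{}^* s'_n = δ_{mn}·1 for all m, n ≥ 1, and let Ω ∈ H and Ω' ∈ H' be unit vectors, cyclic for (s_n) and (s'_n) respectively, with s_j Ω = Ω and s'_j Ω' = Ω'. Then there exists a unitary operator U : H → H' such that U Ω = Ω' and U s_n = s'_n U for every n ≥ 1. (Any two representations in the class P∞(j) are unitarily equivalent.) -/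
/-- The vector `s_{w₁} ⋯ s_{w_k} Ω` attached to a word `w`. -/
noncomputable def wordVec {H : Type*} [NormedAddCommGroup H] [InnerProductSpace ℂ H]
    (s : ℕ → H →L[ℂ] H) (Ω : H) : List ℕ+ → H
  | [] => Ω
  | a :: w => s a (wordVec s Ω w)

theorem cuntz_apply {H : Type*} [NormedAddCommGroup H] [InnerProductSpace ℂ H] [CompleteSpace H]
    (s : ℕ → H →L[ℂ] H)
    (hCuntz : ∀ m n, 1 ≤ m → 1 ≤ n →
      (ContinuousLinearMap.adjoint (s m)).comp (s n) =
        if m = n then (1 : H →L[ℂ] H) else 0)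
    (m n : ℕ) (hm : 1 ≤ m) (hn : 1 ≤ n) (v : H) :
    ContinuousLinearMap.adjoint (s m) (s n v) = if m = n then v else 0 := by
  have h := congrArg (fun T : H →L[ℂ] H => T v) (hCuntz m n hm hn)
  simp only [ContinuousLinearMap.comp_apply] at h
  rw [h]
  split_ifs <;> simp

theorem cuntz_inner {H : Type*} [NormedAddCommGroup H] [InnerProductSpace ℂ H] [CompleteSpace H]
    (s : ℕ → H →L[ℂ] H)
    (hCuntz : ∀ m n, 1 ≤ m → 1 ≤ n →
      (ContinuousLinearMap.adjoint (s m)).comp (s n) =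
        if m = n then (1 : H →L[ℂ] H) else 0)
    (m n : ℕ) (hm : 1 ≤ m) (hn : 1 ≤ n) (u v : H) :
    inner ℂ (s m u) (s n v) = if m = n then inner ℂ u v else 0 := by
  rw [← ContinuousLinearMap.adjoint_inner_right, cuntz_apply s hCuntz m n hm hn]
  split_ifs <;> simp

theorem wordVec_dense {H : Type*} [NormedAddCommGroup H] [InnerProductSpace ℂ H] [CompleteSpace H]
    (j : ℕ) (hj : 1 ≤ j) (s : ℕ → H →L[ℂ] H)
    (hCuntz : ∀ m n, 1 ≤ m → 1 ≤ n →
      (ContinuousLinearMap.adjoint (s m)).comp (s n) =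
        if m = n then (1 : H →L[ℂ] H) else 0)
    (Ω : H)
    (hcyc : ∀ K : Submodule ℂ H, IsClosed (K : Set H) → Ω ∈ K →
      (∀ n, 1 ≤ n → ∀ v ∈ K, s n v ∈ K) →
      (∀ n, 1 ≤ n → ∀ v ∈ K, ContinuousLinearMap.adjoint (s n) v ∈ K) → K = ⊤)
    (hfix : s j Ω = Ω) :
    DenseRange (Finsupp.linearCombination ℂ (wordVec s Ω)) := by
  set V : Submodule ℂ H := Submodule.span ℂ (Set.range (wordVec s Ω)) with hV
  have hmem : ∀ w, wordVec s Ω w ∈ V := fun w => Submodule.subset_span ⟨w, rfl⟩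
  have key : ∀ T : H →L[ℂ] H, (∀ w, T (wordVec s Ω w) ∈ V) →
      ∀ v ∈ V.topologicalClosure, T v ∈ V.topologicalClosure := by
    intro T hT v hv
    have h1 : ∀ x ∈ V, T x ∈ V := by
      have : V ≤ V.comap (T : H →ₗ[ℂ] H) := by
        rw [hV, Submodule.span_le]
        rintro _ ⟨w, rfl⟩
        exact hT w
      exact this
    exact map_mem_closure T.continuous hv h1
  have htop : V.topologicalClosure = ⊤ := by
    apply hcyc _ V.isClosed_topologicalClosure (V.le_topologicalClosure (hmem []))
    · intro n hn
      exact key _ fun w => hmem ((⟨n, hn⟩ : ℕ+) :: w)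
    · intro n hn
      apply key
      intro w
      cases w with
      | nil =>
        have : ContinuousLinearMap.adjoint (s n) Ω = if n = j then Ω else 0 := by
          conv_lhs => rw [← hfix]
          exact cuntz_apply s hCuntz n j hn hj Ω
        change ContinuousLinearMap.adjoint (s n) Ω ∈ V
        rw [this]
        split_ifs
        · exact hmem []
        · exact V.zero_mem
      | cons a w =>
        change ContinuousLinearMap.adjoint (s n) (s a (wordVec s Ω w)) ∈ V
        rw [cuntz_apply s hCuntz n a hn a.2]
        split_ifs
        · exact hmem w
        · exact V.zero_mem
  have h2 := Submodule.dense_iff_topologicalClosure_eq_top.mpr htop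
  rw [hV, ← Finsupp.range_linearCombination] at h2
  exact h2

theorem wordVec_gram
    {H : Type*} [NormedAddCommGroup H] [InnerProductSpace ℂ H] [CompleteSpace H]
    {H' : Type*} [NormedAddCommGroup H'] [InnerProductSpace ℂ H'] [CompleteSpace H']
    (j : ℕ) (hj : 1 ≤ j)
    (s : ℕ → H →L[ℂ] H) (s' : ℕ → H' →L[ℂ] H')
    (hCuntz : ∀ m n, 1 ≤ m → 1 ≤ n →
      (ContinuousLinearMap.adjoint (s m)).comp (s n) =
        if m = n then (1 : H →L[ℂ] H) else 0)
    (hCuntz' : ∀ m n, 1 ≤ m → 1 ≤ n →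
      (ContinuousLinearMap.adjoint (s' m)).comp (s' n) =
        if m = n then (1 : H' →L[ℂ] H') else 0)
    (Ω : H) (hΩnorm : ‖Ω‖ = 1)
    (Ω' : H') (hΩ'norm : ‖Ω'‖ = 1)
    (hfix : s j Ω = Ω) (hfix' : s' j Ω' = Ω') (u w : List ℕ+) :
    inner ℂ (wordVec s Ω u) (wordVec s Ω w) = inner ℂ (wordVec s' Ω' u) (wordVec s' Ω' w) := by
  induction u generalizing w with
  | nil =>
    induction w with
    | nil => simp [wordVec, inner_self_eq_norm_sq_to_K, hΩnorm, hΩ'norm]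
    | cons b w ih =>
      simp only [wordVec] at ih ⊢
      have e1 := cuntz_inner s hCuntz j b hj b.2 Ω (wordVec s Ω w)
      have e2 := cuntz_inner s' hCuntz' j b hj b.2 Ω' (wordVec s' Ω' w)
      rw [hfix] at e1
      rw [hfix'] at e2
      rw [e1, e2, ih]
  | cons a u ih =>
    cases w with
    | nil =>
      have ih0 := ih []
      simp only [wordVec] at ih0 ⊢
      have e1 := cuntz_inner s hCuntz a j a.2 hj (wordVec s Ω u) Ω
      have e2 := cuntz_inner s' hCuntz' a j a.2 hj (wordVec s' Ω' u) Ω'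
      rw [hfix] at e1
      rw [hfix'] at e2
      rw [e1, e2, ih0]
    | cons b w =>
      simp only [wordVec]
      rw [cuntz_inner s hCuntz a b a.2 b.2, cuntz_inner s' hCuntz' a b a.2 b.2, ih w]


theorem P_infty_j_unique_up_to_unitary_equivalence
    {H : Type*} [NormedAddCommGroup H] [InnerProductSpace ℂ H] [CompleteSpace H]
    {H' : Type*} [NormedAddCommGroup H'] [InnerProductSpace ℂ H'] [CompleteSpace H']
    (j : ℕ) (hj : 1 ≤ j)
    (s : ℕ → H →L[ℂ] H) (s' : ℕ → H' →L[ℂ] H')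
    (hCuntz : ∀ m n, 1 ≤ m → 1 ≤ n →
      (ContinuousLinearMap.adjoint (s m)).comp (s n) =
        if m = n then (1 : H →L[ℂ] H) else 0)
    (hCuntz' : ∀ m n, 1 ≤ m → 1 ≤ n →
      (ContinuousLinearMap.adjoint (s' m)).comp (s' n) =
        if m = n then (1 : H' →L[ℂ] H') else 0)
    (Ω : H) (hΩnorm : ‖Ω‖ = 1)
    (Ω' : H') (hΩ'norm : ‖Ω'‖ = 1)
    (hcyc : ∀ K : Submodule ℂ H, IsClosed (K : Set H) → Ω ∈ K →
      (∀ n, 1 ≤ n → ∀ v ∈ K, s n v ∈ K) →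
      (∀ n, 1 ≤ n → ∀ v ∈ K, ContinuousLinearMap.adjoint (s n) v ∈ K) → K = ⊤)
    (hcyc' : ∀ K : Submodule ℂ H', IsClosed (K : Set H') → Ω' ∈ K →
      (∀ n, 1 ≤ n → ∀ v ∈ K, s' n v ∈ K) →
      (∀ n, 1 ≤ n → ∀ v ∈ K, ContinuousLinearMap.adjoint (s' n) v ∈ K) → K = ⊤)
    (hfix : s j Ω = Ω) (hfix' : s' j Ω' = Ω') :
    ∃ U : H ≃ₗᵢ[ℂ] H', U Ω = Ω' ∧ ∀ n, 1 ≤ n → ∀ v : H, U (s n v) = s' n (U v) := by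
  have hd := wordVec_dense j hj s hCuntz Ω hcyc hfix
  have hd' := wordVec_dense j hj s' hCuntz' Ω' hcyc' hfix'
  have hg := wordVec_gram j hj s s' hCuntz hCuntz' Ω hΩnorm Ω' hΩ'norm hfix hfix'
  have hnorm : ∀ x, ‖Finsupp.linearCombination ℂ (wordVec s' Ω')
        (LinearEquiv.refl ℂ (List ℕ+ →₀ ℂ) x)‖
      = ‖Finsupp.linearCombination ℂ (wordVec s Ω) x‖ := by
    intro x
    rw [LinearEquiv.refl_apply, @norm_eq_sqrt_re_inner ℂ, @norm_eq_sqrt_re_inner ℂ]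
    simp only [Finsupp.linearCombination_apply, Finsupp.sum, sum_inner, inner_sum,
      inner_smul_left, inner_smul_right, hg]
  let U := LinearEquiv.extendOfIsometry (LinearEquiv.refl ℂ (List ℕ+ →₀ ℂ)) _ _ hd hd' hnorm
  have hU : ∀ x, U (Finsupp.linearCombination ℂ (wordVec s Ω) x)
      = Finsupp.linearCombination ℂ (wordVec s' Ω') x := fun x =>
    LinearEquiv.extendOfIsometry_eq _ _ _ hd hd' hnorm x
  have hUw : ∀ w, U (wordVec s Ω w) = wordVec s' Ω' w := by
    intro w
    have := hU (Finsupp.single w 1)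
    simpa using this
  refine ⟨U, hUw [], fun n hn v => ?_⟩
  refine hd.induction_on (p := fun v => U (s n v) = s' n (U v)) v
    (isClosed_eq (by fun_prop) (by fun_prop)) ?_
  intro x
  induction x using Finsupp.induction_linear with
  | zero => simp
  | add f g hf hg => simp only [map_add, hf, hg]
  | single w c =>
    have h1 := hUw w
    have h2 : U (s n (wordVec s Ω w)) = s' n (wordVec s' Ω' w) := hUw ((⟨n, hn⟩ : ℕ+) :: w)
    simp only [Finsupp.linearCombination_single, map_smul, h1, h2]
end

section
/- Let i and j be distinct positive integers. Let H and H' be complex Hilbert spaces, let (s_n)_{n ≥ 1} and (s'_n)_{n ≥ 1} be families of bounded operators on H and H' respectively with s_m^* s_n = δ_{mn}·1 and s'_m{}^* s'_n = δ_{mn}·1 for all m, n ≥ 1, and let Ω ∈ H and Ω' ∈ H' be unit vectors, cyclic for (s_n) and (s'_n) respectively, with s_i Ω = Ω and s'_j Ω' = Ω'. Then there is no unitary operator U : H → H' with U s_n = s'_n U for every n ≥ 1. (The classes P∞(i) and P∞(j) are not unitarily equivalent for i ≠ j.) -/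
theorem P_infty_i_not_equivalent_P_infty_j
    {H : Type*} [NormedAddCommGroup H] [InnerProductSpace ℂ H] [CompleteSpace H]
    {H' : Type*} [NormedAddCommGroup H'] [InnerProductSpace ℂ H'] [CompleteSpace H']
    (i j : ℕ) (hi : 1 ≤ i) (hj : 1 ≤ j) (hij : i ≠ j)
    (s : ℕ → H →L[ℂ] H) (s' : ℕ → H' →L[ℂ] H')
    (hCuntz : ∀ m n, 1 ≤ m → 1 ≤ n →
      (ContinuousLinearMap.adjoint (s m)).comp (s n) =
        if m = n then (1 : H →L[ℂ] H) else 0)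
    (hCuntz' : ∀ m n, 1 ≤ m → 1 ≤ n →
      (ContinuousLinearMap.adjoint (s' m)).comp (s' n) =
        if m = n then (1 : H' →L[ℂ] H') else 0)
    (Ω : H) (hΩnorm : ‖Ω‖ = 1)
    (Ω' : H') (hΩ'norm : ‖Ω'‖ = 1)
    (hcyc : ∀ K : Submodule ℂ H, IsClosed (K : Set H) → Ω ∈ K →
      (∀ n, 1 ≤ n → ∀ v ∈ K, s n v ∈ K) →
      (∀ n, 1 ≤ n → ∀ v ∈ K, ContinuousLinearMap.adjoint (s n) v ∈ K) → K = ⊤)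
    (hcyc' : ∀ K : Submodule ℂ H', IsClosed (K : Set H') → Ω' ∈ K →
      (∀ n, 1 ≤ n → ∀ v ∈ K, s' n v ∈ K) →
      (∀ n, 1 ≤ n → ∀ v ∈ K, ContinuousLinearMap.adjoint (s' n) v ∈ K) → K = ⊤)
    (hfix : s i Ω = Ω) (hfix' : s' j Ω' = Ω') :
    ¬ ∃ U : H ≃ₗᵢ[ℂ] H', ∀ n, 1 ≤ n → ∀ v : H, U (s n v) = s' n (U v) := by
  rintro ⟨U, hU⟩
  set Φ : H' := U Ω with hΦ
  have hΦfix : s' i Φ = Φ := by rw [hΦ, ← hU i hi, hfix]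
  have hC : ∀ m n, 1 ≤ m → 1 ≤ n → ∀ v, ContinuousLinearMap.adjoint (s' m) (s' n v)
      = if m = n then v else 0 := by
    intro m n hm hn v
    have h := congrArg (fun T : H' →L[ℂ] H' => T v) (hCuntz' m n hm hn)
    simp only [ContinuousLinearMap.comp_apply] at h
    rw [h]
    split_ifs <;> simp
  have hinner : ∀ v, inner ℂ Φ v = inner ℂ Φ (ContinuousLinearMap.adjoint (s' i) v) := by
    intro v
    rw [ContinuousLinearMap.adjoint_inner_right, hΦfix]
  -- functionals `v ↦ ⟪Φ, a_w v⟫` for words `w`; the letter `n` stands for `n + 1`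
  let L : List ℕ → (H' →L[ℂ] ℂ) := fun w =>
    w.foldr (fun n f => f.comp (ContinuousLinearMap.adjoint (s' (n + 1)))) (innerSL ℂ Φ)
  have hLnil : ∀ v, L [] v = inner ℂ Φ v := fun v => rfl
  have hLcons : ∀ n w v, L (n :: w) v = L w (ContinuousLinearMap.adjoint (s' (n + 1)) v) :=
    fun n w v => rfl
  let K : Submodule ℂ H' := ⨅ w, LinearMap.ker (L w : H' →ₗ[ℂ] ℂ)
  have hK : ∀ v, v ∈ K ↔ ∀ w, L w v = 0 := by
    intro v
    simp [K, Submodule.mem_iInf]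
  have hclosed : IsClosed (K : Set H') := by
    have : (K : Set H') = ⋂ w, {v | L w v = 0} := by
      ext v
      simp only [SetLike.mem_coe, hK, Set.mem_iInter, Set.mem_setOf_eq]
    rw [this]
    exact isClosed_iInter fun w => isClosed_eq (L w).continuous continuous_const
  have hΩK : Ω' ∈ K := by
    rw [hK]
    intro w
    induction w with
    | nil =>
      rw [hLnil, hinner, ← hfix', hC i j hi hj, if_neg hij, inner_zero_right]
    | cons n w ih =>
      rw [hLcons, ← hfix', hC (n + 1) j (by omega) hj]
      split_ifs
      · exact ih
      · simp
  have htop := hcyc' K hclosed hΩK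
    (by
      intro n hn v hv
      rw [hK] at hv ⊢
      intro w
      cases w with
      | nil =>
        rw [hLnil, hinner, hC i n hi hn]
        split_ifs
        · exact hv []
        · simp
      | cons m w =>
        rw [hLcons, hC (m + 1) n (by omega) hn]
        split_ifs
        · exact hv w
        · simp)
    (by
      intro n hn v hv
      rw [hK] at hv ⊢
      intro w
      obtain ⟨m, rfl⟩ : ∃ m, n = m + 1 := ⟨n - 1, by omega⟩
      exact hv (m :: w))
  have hΦK : Φ ∈ K := htop ▸ Submodule.mem_top
  have h0 : inner ℂ Φ Φ = (0 : ℂ) := (hK Φ).1 hΦK []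
  have h1 : ‖Φ‖ = 1 := by rw [hΦ, U.norm_map, hΩnorm]
  rw [inner_self_eq_zero] at h0
  rw [h0, norm_zero] at h1
  exact zero_ne_one h1
end

section
/- Let i ≥ 1. Let H and H' be complex Hilbert spaces, let (s_n)_{n ≥ 1} and (s'_n)_{n ≥ 1} be families of bounded operators on H and H' respectively with s_m^* s_n = δ_{mn}·1 and s'_m{}^* s'_n = δ_{mn}·1 for all m, n ≥ 1, and let Ω ∈ H and Ω' ∈ H' be unit vectors, cyclic for (s_n) and (s'_n) respectively, with s_1(s_2 Ω) = Ω and s'_i Ω' = Ω'. Then there is no unitary operator U : H → H' with U s_n = s'_n U for every n ≥ 1. (The class P∞(12) is not unitarily equivalent to any class P∞(i).) -/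
/-- The vectors obtained from `w` by applying words in the generators. -/
inductive WordOrbit {E : Type*} (t : ℕ → E → E) (w : E) : E → Prop
  | base : WordOrbit t w w
  | step (n : ℕ) (hn : 1 ≤ n) (v : E) (hv : WordOrbit t w v) : WordOrbit t w (t n v)

theorem P_infty_12_not_equivalent_P_infty_i
    {H : Type*} [NormedAddCommGroup H] [InnerProductSpace ℂ H] [CompleteSpace H]
    {H' : Type*} [NormedAddCommGroup H'] [InnerProductSpace ℂ H'] [CompleteSpace H']
    (i : ℕ) (hi : 1 ≤ i)
    (s : ℕ → H →L[ℂ] H) (s' : ℕ → H' →L[ℂ] H')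
    (hCuntz : ∀ m n, 1 ≤ m → 1 ≤ n →
      (ContinuousLinearMap.adjoint (s m)).comp (s n) =
        if m = n then (1 : H →L[ℂ] H) else 0)
    (hCuntz' : ∀ m n, 1 ≤ m → 1 ≤ n →
      (ContinuousLinearMap.adjoint (s' m)).comp (s' n) =
        if m = n then (1 : H' →L[ℂ] H') else 0)
    (Ω : H) (hΩnorm : ‖Ω‖ = 1)
    (Ω' : H') (hΩ'norm : ‖Ω'‖ = 1)
    (hcyc : ∀ K : Submodule ℂ H, IsClosed (K : Set H) → Ω ∈ K →
      (∀ n, 1 ≤ n → ∀ v ∈ K, s n v ∈ K) →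
      (∀ n, 1 ≤ n → ∀ v ∈ K, ContinuousLinearMap.adjoint (s n) v ∈ K) → K = ⊤)
    (hcyc' : ∀ K : Submodule ℂ H', IsClosed (K : Set H') → Ω' ∈ K →
      (∀ n, 1 ≤ n → ∀ v ∈ K, s' n v ∈ K) →
      (∀ n, 1 ≤ n → ∀ v ∈ K, ContinuousLinearMap.adjoint (s' n) v ∈ K) → K = ⊤)
    (hfix : s 1 (s 2 Ω) = Ω) (hfix' : s' i Ω' = Ω') :
    ¬ ∃ U : H ≃ₗᵢ[ℂ] H', ∀ n, 1 ≤ n → ∀ v : H, U (s n v) = s' n (U v) := by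
  rintro ⟨U, hU⟩
  have key : ∀ m n, 1 ≤ m → 1 ≤ n → ∀ x y : H',
      inner ℂ (s' m x) (s' n y) = if m = n then inner ℂ x y else 0 := by
    intro m n hm hn x y
    rw [← ContinuousLinearMap.adjoint_inner_right, ← ContinuousLinearMap.comp_apply,
      hCuntz' m n hm hn]
    split_ifs <;> simp
  have hadj : ∀ m n, 1 ≤ m → 1 ≤ n → ∀ y : H',
      ContinuousLinearMap.adjoint (s' m) (s' n y) = if m = n then y else 0 := by
    intro m n hm hn y
    rw [← ContinuousLinearMap.comp_apply, hCuntz' m n hm hn]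
    split_ifs <;> simp
  obtain ⟨p, hp⟩ : ∃ p, p = U Ω := ⟨_, rfl⟩
  have hpn : ‖p‖ = 1 := by rw [hp, U.norm_map, hΩnorm]
  have hpf : s' 1 (s' 2 p) = p := by
    rw [hp, ← hU 2 (by norm_num), ← hU 1 le_rfl, hfix]
  have h1 : ∀ n, 1 ≤ n → ∀ v, inner ℂ p (s' n v) = if 1 = n then inner ℂ (s' 2 p) v else 0 := by
    intro n hn v
    have := key 1 n le_rfl hn (s' 2 p) v
    rwa [hpf] at this
  have h2 : ∀ n, 1 ≤ n → ∀ v, inner ℂ (s' 2 p) (s' n v) = if 2 = n then inner ℂ p v else 0 :=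
    fun n hn v => key 2 n (by norm_num) hn p v
  have orth : ∀ v, WordOrbit (fun n => ⇑(s' n)) Ω' v →
      inner ℂ p v = 0 ∧ inner ℂ (s' 2 p) v = 0 := by
    intro v hv
    induction hv with
    | base =>
      have a := h1 i hi Ω'
      have b := h2 i hi Ω'
      rw [hfix'] at a b
      by_cases h : 1 = i
      · have h' : ¬ 2 = i := by omega
        rw [if_neg h'] at b
        rw [if_pos h, b] at a
        exact ⟨a, b⟩
      · rw [if_neg h] at a
        rw [a, ite_self] at b
        exact ⟨a, b⟩
    | step n hn v _ ih =>
      refine ⟨?_, ?_⟩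
      · simp only [h1 n hn v, ih.2, ite_self]
      · simp only [h2 n hn v, ih.1, ite_self]
  let S : Submodule ℂ H' := Submodule.span ℂ {v | WordOrbit (fun n => ⇑(s' n)) Ω' v}
  have ext : ∀ T : H' →L[ℂ] H', (∀ v, WordOrbit (fun n => ⇑(s' n)) Ω' v → T v ∈ S) →
      ∀ v ∈ S.topologicalClosure, T v ∈ S.topologicalClosure := by
    intro T hT
    have hle : S ≤ S.topologicalClosure.comap T.toLinearMap :=
      Submodule.span_le.2 fun v hv => S.le_topologicalClosure (hT v hv)
    have hcl : IsClosed ((S.topologicalClosure.comap T.toLinearMap : Submodule ℂ H') : Set H') :=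
      S.isClosed_topologicalClosure.preimage T.continuous
    exact fun v hv => Submodule.topologicalClosure_minimal S hle hcl hv
  have htop : S.topologicalClosure = ⊤ := by
    apply hcyc' _ S.isClosed_topologicalClosure
    · exact S.le_topologicalClosure (Submodule.subset_span WordOrbit.base)
    · intro n hn
      exact ext _ fun v hv => Submodule.subset_span (WordOrbit.step n hn v hv)
    · intro n hn
      refine ext _ fun v hv => ?_
      cases hv with
      | base =>
        have a := hadj n i hn hi Ω'
        rw [hfix'] at a
        rw [a]
        split_ifs
        · exact Submodule.subset_span WordOrbit.base
        · exact S.zero_mem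
      | step m hm v hv =>
        simp only [hadj n m hn hm v]
        split_ifs
        · exact Submodule.subset_span hv
        · exact S.zero_mem
  have hS : S ≤ (Submodule.span ℂ {p})ᗮ :=
    Submodule.span_le.2 fun v hv => Submodule.mem_orthogonal_singleton_iff_inner_right.2 (orth v hv).1
  have hmem : p ∈ S.topologicalClosure := htop ▸ Submodule.mem_top
  have hpp := Submodule.topologicalClosure_minimal S hS (Submodule.isClosed_orthogonal _) hmem
  rw [Submodule.mem_orthogonal_singleton_iff_inner_right, inner_self_eq_zero] at hpp
  rw [hpp, norm_zero] at hpn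
  exact zero_ne_one hpn
end

section
/- Let 2 ≤ N < ∞, let H be a complex Hilbert space, and let t_1, …, t_N be bounded operators on H with t_i^* t_j = δ_{ij}·1 for all 1 ≤ i, j ≤ N and ∑_{i=1}^N t_i t_i^* = 1. Let Ω ∈ H be a unit vector that is cyclic for (t_1, …, t_N) and satisfies t_1 Ω = Ω. Define a family (u_p)_{p ≥ 1} of operators on H by u_{(N−1)(k−1)+i} = t_N^{k−1} t_i for every k ≥ 1 and 1 ≤ i ≤ N−1 (every positive integer p is uniquely of this form). Then: (1) u_p^* u_q = δ_{pq}·1 for all p, q ≥ 1, so (u_p) encodes a representation of the Cuntz algebra O∞ on H; (2) u_1 Ω = Ω; and (3) Ω is cyclic for the family (u_p), i.e. the smallest closed subspace of H containing Ω and invariant under every u_p and every u_p^* is H itself. (Thus the restriction of the class P_N(1) of O_N along the standard embedding of O∞ into O_N is the class P∞(1), and hence its restriction to the boson algebra is the Fock representation.) -/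
/-- Vectors of the form `t_w Ω` for a word `w` in the letters `1, …, N`. -/
inductive CuntzWordVec {H : Type*} [NormedAddCommGroup H] [InnerProductSpace ℂ H]
    (N : ℕ) (t : ℕ → H →L[ℂ] H) (Ω : H) : H → Prop
  | base : CuntzWordVec N t Ω Ω
  | step (i : ℕ) (v : H) (h1 : 1 ≤ i) (h2 : i ≤ N) (hv : CuntzWordVec N t Ω v) :
      CuntzWordVec N t Ω (t i v)

/-- Orthogonality relations for `t_N^a t_i`. -/
lemma cuntz_block_orth {A : Type*} [Ring A] [StarRing A] (N : ℕ) (t : ℕ → A)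
    (h : ∀ i j, 1 ≤ i → i ≤ N → 1 ≤ j → j ≤ N → star (t i) * t j = if i = j then 1 else 0)
    (i j : ℕ) (hi : 1 ≤ i) (hiN : i < N) (hj : 1 ≤ j) (hjN : j < N) (a : ℕ) :
    ∀ b : ℕ, star (t N ^ a * t i) * (t N ^ b * t j) = if a = b ∧ i = j then 1 else 0 := by
  have hNN : star (t N) * t N = 1 := by simpa using h N N (by omega) le_rfl (by omega) le_rfl
  have hiN' : star (t i) * t N = 0 := by
    rw [h i N hi hiN.le (by omega) le_rfl, if_neg (by omega)]
  have hNj : star (t N) * t j = 0 := by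
    rw [h N j (by omega) le_rfl hj hjN.le, if_neg (by omega)]
  induction a with
  | zero =>
    intro b
    cases b with
    | zero => simpa using h i j hi hiN.le hj hjN.le
    | succ b =>
      rw [if_neg (by omega), pow_zero, one_mul, pow_succ', mul_assoc, ← mul_assoc, hiN', zero_mul]
  | succ a ih =>
    intro b
    cases b with
    | zero =>
      rw [if_neg (by omega), pow_zero, one_mul, pow_succ', mul_assoc, star_mul, mul_assoc, hNj,
        mul_zero]
    | succ b =>
      have e : star (t N ^ (a + 1) * t i) * (t N ^ (b + 1) * t j)
          = star (t N ^ a * t i) * ((star (t N) * t N) * (t N ^ b * t j)) := by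
        rw [pow_succ', pow_succ', mul_assoc, star_mul]
        simp only [mul_assoc]
      rw [e, hNN, one_mul, ih b]
      simp


theorem restriction_of_P_N_1_is_P_infty_1
    {H : Type*} [NormedAddCommGroup H] [InnerProductSpace ℂ H] [CompleteSpace H]
    (N : ℕ) (hN : 2 ≤ N)
    (t : ℕ → H →L[ℂ] H)
    (hCuntz : ∀ i j, 1 ≤ i → i ≤ N → 1 ≤ j → j ≤ N →
      (ContinuousLinearMap.adjoint (t i)).comp (t j) =
        if i = j then (1 : H →L[ℂ] H) else 0)
    (hsum : ∑ i ∈ Finset.Icc 1 N, (t i).comp (ContinuousLinearMap.adjoint (t i)) =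
      (1 : H →L[ℂ] H))
    (Ω : H) (hΩnorm : ‖Ω‖ = 1)
    (hcyc : ∀ K : Submodule ℂ H, IsClosed (K : Set H) → Ω ∈ K →
      (∀ i, 1 ≤ i → i ≤ N → ∀ v ∈ K, t i v ∈ K) →
      (∀ i, 1 ≤ i → i ≤ N → ∀ v ∈ K, ContinuousLinearMap.adjoint (t i) v ∈ K) → K = ⊤)
    (hfix : t 1 Ω = Ω)
    (u : ℕ → H →L[ℂ] H)
    (hu : ∀ k i, 1 ≤ k → 1 ≤ i → i ≤ N - 1 →
      u ((N - 1) * (k - 1) + i) = ((t N) ^ (k - 1)).comp (t i)) :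
    (∀ p q, 1 ≤ p → 1 ≤ q →
      (ContinuousLinearMap.adjoint (u p)).comp (u q) =
        if p = q then (1 : H →L[ℂ] H) else 0) ∧
    u 1 Ω = Ω ∧
    (∀ K : Submodule ℂ H, IsClosed (K : Set H) → Ω ∈ K →
      (∀ p, 1 ≤ p → ∀ v ∈ K, u p v ∈ K) →
      (∀ p, 1 ≤ p → ∀ v ∈ K, ContinuousLinearMap.adjoint (u p) v ∈ K) → K = ⊤) := by
  have hdec : ∀ p, 1 ≤ p → ∃ a i, 1 ≤ i ∧ i < N ∧ p = (N - 1) * a + i ∧ u p = t N ^ a * t i := by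
    intro p hp
    have hm : (p - 1) % (N - 1) < N - 1 := Nat.mod_lt _ (by omega)
    have hd := Nat.div_add_mod (p - 1) (N - 1)
    have hpe : p = (N - 1) * ((p - 1) / (N - 1)) + ((p - 1) % (N - 1) + 1) := by omega
    refine ⟨(p - 1) / (N - 1), (p - 1) % (N - 1) + 1, by omega, by omega, hpe, ?_⟩
    have := hu ((p - 1) / (N - 1) + 1) ((p - 1) % (N - 1) + 1) (Nat.le_add_left 1 _) (by omega) (by omega)
    rw [Nat.add_sub_cancel, ← hpe] at this
    exact this
  have hu' : ∀ a i, 1 ≤ i → i < N → ∀ v, u ((N - 1) * a + i) v = (t N ^ a) (t i v) := by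
    intro a i h1 h2 v
    have := hu (a + 1) i (by omega) h1 (by omega)
    rw [Nat.add_sub_cancel] at this
    rw [this]
    rfl
  refine ⟨?_, ?_, ?_⟩
  · intro p q hp hq
    obtain ⟨a, i, hi, hiN, hpe, hup⟩ := hdec p hp
    obtain ⟨b, j, hj, hjN, hqe, huq⟩ := hdec q hq
    have key := cuntz_block_orth N t hCuntz i j hi hiN hj hjN a b
    rw [← hup, ← huq] at key
    have hiff : p = q ↔ (a = b ∧ i = j) := by
      constructor
      · intro h
        rw [hpe, hqe] at h
        have hab : a = b := by
          rcases lt_trichotomy a b with hlt | heq | hlt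
          · have := Nat.mul_le_mul_left (N - 1) (Nat.succ_le_of_lt hlt)
            rw [Nat.mul_succ] at this
            omega
          · exact heq
          · have := Nat.mul_le_mul_left (N - 1) (Nat.succ_le_of_lt hlt)
            rw [Nat.mul_succ] at this
            omega
        subst hab
        exact ⟨rfl, by omega⟩
      · rintro ⟨rfl, rfl⟩
        rw [hpe, hqe]
    simp only [hiff]
    exact key
  · have := hu' 0 1 le_rfl (by omega) Ω
    simpa [hfix] using this
  · intro K hK hΩ hKu _
    have hword : ∀ v, CuntzWordVec N t Ω v → ∀ k : ℕ, (t N ^ k) v ∈ K := by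
      intro v hv
      induction hv with
      | base =>
        intro k
        have h := hKu ((N - 1) * k + 1) (by omega) Ω hΩ
        rw [hu' k 1 le_rfl (by omega), hfix] at h
        exact h
      | step i v h1 h2 hv ih =>
        intro k
        rcases h2.eq_or_lt with h | h
        · subst h
          have := ih (k + 1)
          rw [pow_succ] at this
          exact this
        · have h0 : v ∈ K := by simpa using ih 0
          have h' := hKu ((N - 1) * k + i) (by omega) v h0
          rwa [hu' k i h1 h] at h'
    have hadj : ∀ i j, 1 ≤ i → i ≤ N → 1 ≤ j → j ≤ N → ∀ v,
        ContinuousLinearMap.adjoint (t i) (t j v) = if i = j then v else 0 := by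
      intro i j h1 h2 h3 h4 v
      have := congrArg (fun T : H →L[ℂ] H => T v) (hCuntz i j h1 h2 h3 h4)
      simp only [ContinuousLinearMap.comp_apply] at this
      rw [this]
      split_ifs <;> simp
    let S : Submodule ℂ H := Submodule.span ℂ {v | CuntzWordVec N t Ω v}
    have hmap : ∀ T : H →L[ℂ] H, (∀ v, CuntzWordVec N t Ω v → T v ∈ S) →
        ∀ v ∈ S.topologicalClosure, T v ∈ S.topologicalClosure := by
      intro T hT v hv
      have hle : S ≤ S.comap (T : H →ₗ[ℂ] H) := Submodule.span_le.2 hT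
      have hm : Set.MapsTo T (S : Set H) (S : Set H) := fun x hx => hle hx
      exact hm.closure T.continuous hv
    have htop : S.topologicalClosure = ⊤ := by
      apply hcyc _ S.isClosed_topologicalClosure
      · exact S.le_topologicalClosure (Submodule.subset_span CuntzWordVec.base)
      · intro i h1 h2
        exact hmap _ fun v hv => Submodule.subset_span (CuntzWordVec.step i v h1 h2 hv)
      · intro i h1 h2
        refine hmap _ fun v hv => ?_
        cases hv with
        | base =>
          have := hadj i 1 h1 h2 le_rfl (by omega) Ω
          rw [hfix] at this
          rw [this]
          split_ifs
          · exact Submodule.subset_span CuntzWordVec.base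
          · exact S.zero_mem
        | step j w h3 h4 hw =>
          rw [hadj i j h1 h2 h3 h4]
          split_ifs
          · exact Submodule.subset_span hw
          · exact S.zero_mem
    rw [eq_top_iff, ← htop]
    refine S.topologicalClosure_minimal (Submodule.span_le.2 fun v hv => ?_) hK
    simpa using hword v hv 0
end
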